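/- arXiv:2306.17272 — 2 statements merged into one kernel-verified Lean document; each statement's English description precedes it below -/
import Mathlib

section
/- Let G be a connected graph in the class W2 with G not isomorphic to K2, and let v be any vertex of G. Then at least one of the following holds: (1) v lies on a triangle (v, v1, v2) such that the set {v1, v2} is not dominated by N2(v); (2) v lies on a cycle of length 5. -/
open SimpleGraph

/-- A set of vertices is independent if its elements are pairwise nonadjacent. -/
def IsIndep {V : Type*} (G : SimpleGraph V) (S : Set V) : Prop :=
  S.Pairwise fun a b => ¬ G.Adj a b

/-- The closed neighborhood `N[S]` of a set of vertices. -/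
def closedNbhd {V : Type*} (G : SimpleGraph V) (S : Set V) : Set V :=
  S ∪ {x | ∃ s ∈ S, G.Adj s x}

/-- The open neighborhood `N(S) = N[S] \ S` of a set of vertices. -/
def openNbhd {V : Type*} (G : SimpleGraph V) (S : Set V) : Set V :=
  closedNbhd G S \ S

/-- `S` dominates `T` if `T ⊆ N[S]`. -/
def Dominates {V : Type*} (G : SimpleGraph V) (S T : Set V) : Prop :=
  T ⊆ closedNbhd G S

/-- `N₂(v)`: the set of vertices at distance exactly 2 from `v`. -/
def N2 {V : Type*} (G : SimpleGraph V) (v : V) : Set V :=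
  {u | u ≠ v ∧ ¬ G.Adj v u ∧ ∃ w, G.Adj v w ∧ G.Adj w u}

/-- A maximal independent set of the subgraph of `G` induced by `A`. -/
def IsMaximalIndepOn {V : Type*} (G : SimpleGraph V) (A S : Set V) : Prop :=
  S ⊆ A ∧ IsIndep G S ∧ ∀ T, T ⊆ A → IsIndep G T → S ⊆ T → S = T

/-- A maximal independent set of `G`. -/
def IsMaximalIndep {V : Type*} (G : SimpleGraph V) (S : Set V) : Prop :=
  IsMaximalIndepOn G Set.univ S

/-- A maximum independent set of the subgraph of `G` induced by `A`. -/
def IsMaxIndepOn {V : Type*} (G : SimpleGraph V) (A S : Set V) : Prop :=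
  S ⊆ A ∧ IsIndep G S ∧ ∀ T, T ⊆ A → IsIndep G T → T.ncard ≤ S.ncard

/-- A maximum independent set of `G`. -/
def IsMaxIndep {V : Type*} (G : SimpleGraph V) (S : Set V) : Prop :=
  IsMaxIndepOn G Set.univ S

/-- The independence number of the subgraph of `G` induced by `A`. -/
noncomputable def alphaOn {V : Type*} (G : SimpleGraph V) (A : Set V) : ℕ :=
  sSup {n | ∃ S, S ⊆ A ∧ IsIndep G S ∧ S.ncard = n}

/-- The independence number `α(G)`. -/
noncomputable def alpha {V : Type*} (G : SimpleGraph V) : ℕ :=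
  alphaOn G Set.univ

/-- The subgraph of `G` induced by `A` is well-covered. -/
def WellCoveredOn {V : Type*} (G : SimpleGraph V) (A : Set V) : Prop :=
  ∀ S, IsMaximalIndepOn G A S → IsMaxIndepOn G A S

/-- `G` is well-covered: every maximal independent set is maximum. -/
def WellCovered {V : Type*} (G : SimpleGraph V) : Prop :=
  WellCoveredOn G Set.univ

/-- The subgraph of `G` induced by `A` is in the class `W₂`. -/
def W2On {V : Type*} (G : SimpleGraph V) (A : Set V) : Prop :=
  ∀ S₁ S₂ : Set V, S₁ ⊆ A → S₂ ⊆ A → IsIndep G S₁ → IsIndep G S₂ → Disjoint S₁ S₂ →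
    ∃ T₁ T₂ : Set V, S₁ ⊆ T₁ ∧ S₂ ⊆ T₂ ∧ IsMaxIndepOn G A T₁ ∧ IsMaxIndepOn G A T₂ ∧
      Disjoint T₁ T₂

/-- `G` belongs to the class `W₂`: every two pairwise disjoint independent sets are
included in two pairwise disjoint maximum independent sets. -/
def W2 {V : Type*} (G : SimpleGraph V) : Prop :=
  W2On G Set.univ

/-- `v` is a shedding vertex: for every independent set `S ⊆ V(G) \ N[v]` there exists
`u ∈ N(v)` such that `S ∪ {u}` is independent. -/
def Shedding {V : Type*} (G : SimpleGraph V) (v : V) : Prop :=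
  ∀ S : Set V, Disjoint S (closedNbhd G {v}) → IsIndep G S →
    ∃ u ∈ G.neighborSet v, IsIndep G (insert u S)

/-- The edge `xy` is relating: there is an independent set `S ⊆ V(G) \ N[{x,y}]` such
that both `S ∪ {x}` and `S ∪ {y}` are maximal independent sets of `G`. -/
def Relating {V : Type*} (G : SimpleGraph V) (x y : V) : Prop :=
  ∃ S : Set V, IsIndep G S ∧ Disjoint S (closedNbhd G {x, y}) ∧
    IsMaximalIndep G (insert x S) ∧ IsMaximalIndep G (insert y S)

/-- `G` contains no cycle of length `k` (as a subgraph). -/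
def CycleFree {V : Type*} (G : SimpleGraph V) (k : ℕ) : Prop :=
  ∀ (u : V) (w : G.Walk u u), w.IsCycle → w.length ≠ k

/-- A vertex is simplicial if its closed neighborhood is a clique. -/
def Simplicial {V : Type*} (G : SimpleGraph V) (v : V) : Prop :=
  G.IsClique (closedNbhd G {v})

/-! Maximum independent sets are maximal, so in a `W₂` graph every vertex is shedding: an
independent set away from `N[v]` can be extended by a neighbor of `v`. Apply this to a maximal
independent subset `S` of `N₂(v)` to get a neighbor `u` of `v` without neighbors in `S`. If `u` has
a neighbor `x ∈ N₂(v)`, maximality of `S` yields `y ∈ S` adjacent to `x`, and a common neighbor `w`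
of `v` and `y` closes the 5-cycle `v u x y w`. Otherwise `u` is not dominated by `N₂(v)`; a second
neighbor of `u`, which exists because shedding excludes leaves in connected `W₂` graphs other than
`K₂`, cannot lie in `N₂(v)`, so it is adjacent to `v` and completes the triangle. -/

section

variable {V : Type*} {G : SimpleGraph V} {A S : Set V} {u v x : V}

theorem IsIndep.insert (hS : IsIndep G S) (hx : ∀ y ∈ S, ¬ G.Adj x y) :
    IsIndep G (insert x S) :=
  Set.Pairwise.insert hS fun y hy _ => ⟨hx y hy, fun h => hx y hy h.symm⟩

theorem exists_isMaximalIndepOn (G : SimpleGraph V) (A : Set V) :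
    ∃ S, IsMaximalIndepOn G A S := by
  obtain ⟨S, ⟨hSA, hS⟩, hmax⟩ := zorn_subset {S | S ⊆ A ∧ IsIndep G S} fun c hc hchain =>
    ⟨⋃₀ c, ⟨Set.sUnion_subset fun s hs => (hc hs).1,
      (Set.pairwise_sUnion hchain.directedOn).2 fun s hs => (hc hs).2⟩,
      fun _ => Set.subset_sUnion_of_mem⟩
  exact ⟨S, hSA, hS, fun T hTA hT hST => hST.antisymm (hmax ⟨hTA, hT⟩ hST)⟩

theorem IsMaximalIndepOn.exists_adj (hS : IsMaximalIndepOn G A S) (hxA : x ∈ A) (hxS : x ∉ S) :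
    ∃ y ∈ S, G.Adj x y := by
  by_contra! hx
  have hins : S = insert x S :=
    hS.2.2 _ (Set.insert_subset hxA hS.1) (hS.2.1.insert hx) (Set.subset_insert x S)
  exact hxS (hins ▸ Set.mem_insert x S)

-- An infinite set has `ncard` equal to `0`, which is beaten by any of its singletons.
theorem IsMaxIndepOn.finite (hS : IsMaxIndepOn G A S) : S.Finite := by
  by_contra hinf
  obtain ⟨x, hx⟩ := Set.Infinite.nonempty hinf
  have hcard := hS.2.2 {x} (Set.singleton_subset_iff.2 (hS.1 hx)) (Set.pairwise_singleton _ _)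
  rw [Set.ncard_singleton, Set.Infinite.ncard hinf] at hcard
  exact Nat.not_succ_le_zero 0 hcard

theorem IsMaxIndepOn.isMaximalIndepOn (hS : IsMaxIndepOn G A S) : IsMaximalIndepOn G A S := by
  refine ⟨hS.1, hS.2.1, fun T hTA hT hST => hST.antisymm fun x hxT => ?_⟩
  by_contra hxS
  have hsub : insert x S ⊆ T := Set.insert_subset hxT hST
  have hcard := hS.2.2 (insert x S) (hsub.trans hTA) (Set.Pairwise.mono hsub hT)
  rw [Set.ncard_insert_of_notMem hxS hS.finite] at hcard
  exact Nat.not_succ_le_self _ hcard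

theorem mem_closedNbhd_singleton : x ∈ closedNbhd G {v} ↔ x = v ∨ G.Adj v x := by
  simp [closedNbhd]

theorem disjoint_N2_closedNbhd (G : SimpleGraph V) (v : V) :
    Disjoint (N2 G v) (closedNbhd G {v}) :=
  Set.disjoint_left.2 fun _ hx h => (mem_closedNbhd_singleton.1 h).elim hx.1 hx.2.1

theorem W2.shedding (hW2 : W2 G) (v : V) : Shedding G v := by
  intro S hSv hS
  have hvS : v ∉ S := fun h => Set.disjoint_left.1 hSv h (mem_closedNbhd_singleton.2 (.inl rfl))
  obtain ⟨T₁, T₂, hvT₁, hST₂, -, hT₂, hdisj⟩ := hW2 {v} S (Set.subset_univ _) (Set.subset_univ _)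
    (Set.pairwise_singleton _ _) hS (Set.disjoint_singleton_left.2 hvS)
  have hvT₂ : v ∉ T₂ := Set.disjoint_left.1 hdisj (hvT₁ rfl)
  obtain ⟨u, huT₂, hvu⟩ := hT₂.isMaximalIndepOn.exists_adj (Set.mem_univ v) hvT₂
  exact ⟨u, hvu, Set.Pairwise.mono (Set.insert_subset huT₂ hST₂) hT₂.2.1⟩

theorem W2.neighborSet_eq_singleton_symm (hW2 : W2 G) (hu : G.neighborSet u = {v}) :
    G.neighborSet v = {u} := by
  have hu' : ∀ w, G.Adj u w ↔ w = v := Set.ext_iff.1 hu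
  have huv : G.Adj u v := (hu' v).2 rfl
  refine Set.eq_singleton_iff_unique_mem.2 ⟨huv.symm, fun w hvw => ?_⟩
  by_contra hwu
  have hw : w ∉ closedNbhd G {u} := by
    rw [mem_closedNbhd_singleton, hu', not_or]
    exact ⟨hwu, hvw.ne'⟩
  obtain ⟨z, huz, hz⟩ := hW2.shedding u {w} (Set.disjoint_singleton_left.2 hw)
    (Set.pairwise_singleton _ _)
  obtain rfl : z = v := (hu' z).1 huz
  exact hz (Set.mem_insert _ _) (Set.mem_insert_of_mem _ rfl) hvw.ne hvw

theorem nonempty_iso_top_fin_two_of_neighborSet_eq_singleton (hG : G.Preconnected)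
    (hu : G.neighborSet u = {v}) (hv : G.neighborSet v = {u}) :
    Nonempty (G ≃g (⊤ : SimpleGraph (Fin 2))) := by
  have hu' : ∀ w, G.Adj u w ↔ w = v := Set.ext_iff.1 hu
  have hv' : ∀ w, G.Adj v w ↔ w = u := Set.ext_iff.1 hv
  have huv : G.Adj u v := (hu' v).2 rfl
  have huniv : ∀ x, x = u ∨ x = v := by
    intro x
    by_contra hx
    obtain ⟨p⟩ := hG u x
    obtain ⟨d, -, hfst, hsnd⟩ := p.exists_boundary_dart {u, v} (.inl rfl) hx
    rcases hfst with h | h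
    · exact hsnd (.inr ((hu' _).1 (h ▸ d.adj)))
    · exact hsnd (.inl ((hv' _).1 (h ▸ d.adj)))
  have htop : G = ⊤ := by
    ext a b
    rcases huniv a with rfl | rfl <;> rcases huniv b with rfl | rfl <;>
      simp [huv, huv.symm, huv.ne, huv.ne']
  have hcard : Nat.card V = 2 :=
    Nat.card_eq_two_iff.2 ⟨u, v, huv.ne, Set.eq_univ_of_forall huniv⟩
  have : Finite V := Nat.finite_of_card_ne_zero (hcard ▸ two_ne_zero)
  exact htop ▸ ⟨Iso.completeGraph (Finite.equivFinOfCardEq hcard)⟩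

theorem W2.exists_adj_ne (hW2 : W2 G) (hG : G.Preconnected)
    (hK2 : IsEmpty (G ≃g (⊤ : SimpleGraph (Fin 2)))) (huv : G.Adj u v) :
    ∃ w, G.Adj u w ∧ w ≠ v := by
  by_contra! h
  have hu : G.neighborSet u = {v} := Set.eq_singleton_iff_unique_mem.2 ⟨huv, h⟩
  exact not_nonempty_iff.2 hK2 <| nonempty_iso_top_fin_two_of_neighborSet_eq_singleton hG hu
    (hW2.neighborSet_eq_singleton_symm hu)

theorem exists_isCycle_length_eq_five_of_adj {a b c d e : V} (hab : G.Adj a b) (hbc : G.Adj b c)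
    (hcd : G.Adj c d) (hde : G.Adj d e) (hea : G.Adj e a) (hac : a ≠ c) (had : a ≠ d)
    (hbd : b ≠ d) (hbe : b ≠ e) (hce : c ≠ e) :
    ∃ w : G.Walk a a, w.IsCycle ∧ w.length = 5 := by
  refine ⟨.cons hab (.cons hbc (.cons hcd (.cons hde (.cons hea .nil)))), ?_, rfl⟩
  simp [Walk.cons_isCycle_iff, hab.ne, hab.ne', hbc.ne, hcd.ne, hde.ne, hea.ne, hea.ne',
    hac.symm, had.symm, hac, had, hbd, hbe, hce]

theorem IsMaximalIndepOn.exists_isCycle_length_eq_five (hS : IsMaximalIndepOn G (N2 G v) S)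
    (hvu : G.Adj v u) (huS : IsIndep G (insert u S)) (hu : u ∈ closedNbhd G (N2 G v)) :
    ∃ w : G.Walk v v, w.IsCycle ∧ w.length = 5 := by
  have hu_adj : ∀ s ∈ S, ¬ G.Adj u s := fun s hs h =>
    huS (Set.mem_insert _ _) (Set.mem_insert_of_mem _ hs) h.ne h
  obtain ⟨x, hx, hxu⟩ := hu.resolve_left fun h => h.2.1 hvu
  obtain ⟨y, hyS, hxy⟩ := hS.exists_adj hx fun hxS => hu_adj x hxS hxu.symm
  obtain ⟨hyv, hvy, w, hvw, hwy⟩ := hS.1 hyS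
  have huy : u ≠ y := by rintro rfl; exact hvy hvu
  have huw : u ≠ w := by rintro rfl; exact hu_adj y hyS hwy
  have hxw : x ≠ w := by rintro rfl; exact hx.2.1 hvw
  exact exists_isCycle_length_eq_five_of_adj hvu hxu.symm hxy hwy.symm hvw.symm hx.1.symm hyv.symm
    huy huw hxw

end

theorem stmt1_general {V : Type*} (G : SimpleGraph V) (hconn : G.Connected)
    (hW2 : W2 G) (hK2 : IsEmpty (G ≃g (⊤ : SimpleGraph (Fin 2)))) (v : V) :
    (∃ v₁ v₂ : V, G.Adj v v₁ ∧ G.Adj v v₂ ∧ G.Adj v₁ v₂ ∧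
      ¬ Dominates G (N2 G v) {v₁, v₂}) ∨
    (∃ w : G.Walk v v, w.IsCycle ∧ w.length = 5) := by
  obtain ⟨S, hS⟩ := exists_isMaximalIndepOn G (N2 G v)
  obtain ⟨u, hvu, huS⟩ :=
    hW2.shedding v S ((disjoint_N2_closedNbhd G v).mono_left hS.1) hS.2.1
  by_cases hu : u ∈ closedNbhd G (N2 G v)
  · exact .inr (hS.exists_isCycle_length_eq_five hvu huS hu)
  · obtain ⟨w, huw, hwv⟩ := hW2.exists_adj_ne hconn.preconnected hK2 hvu.symm
    have hvw : G.Adj v w := by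
      by_contra h
      exact hu (.inr ⟨w, ⟨hwv, h, u, hvu, huw⟩, huw.symm⟩)
    exact .inl ⟨u, w, hvu, hvw, huw, fun hdom => hu (hdom (Set.mem_insert u _))⟩

/-- If `G` is a connected `W₂` graph not isomorphic to `K₂` and `v` is any
vertex, then either `v` is on a triangle `(v, v₁, v₂)` with `{v₁, v₂}` not dominated by
`N₂(v)`, or `v` is on a cycle of length 5. -/
theorem stmt1 {V : Type*} [Fintype V] (G : SimpleGraph V) (hconn : G.Connected)
    (hW2 : W2 G) (hK2 : IsEmpty (G ≃g (⊤ : SimpleGraph (Fin 2)))) (v : V) :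
    (∃ v₁ v₂ : V, G.Adj v v₁ ∧ G.Adj v v₂ ∧ G.Adj v₁ v₂ ∧
      ¬ Dominates G (N2 G v) {v₁, v₂}) ∨
    (∃ w : G.Walk v v, w.IsCycle ∧ w.length = 5) :=
  stmt1_general G hconn hW2 hK2 v
end

section
/- Let G be a graph containing no cycle of length 4 and no cycle of length 6 (as subgraphs), and let v ∈ V(G). Then every connected component of the induced subgraph G[N2(v)] contains at most 2 vertices. -/
open SimpleGraph

/-!
Let `a`, `b`, `c` be a path in `G[N₂(v)]`, and let `p`, `q` be neighbours of `v` adjacent to `a` and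
`c` respectively. If `p = q`, then `p a b c` is a 4-cycle; otherwise `v p a b c q` is a 6-cycle.
So `G[N₂(v)]` has maximum degree at most one, and its components are vertices and edges.
-/

section

variable {V : Type*} {G : SimpleGraph V}

theorem eq_or_adj_of_reachable_of_subsingleton_neighborSet
    (h : ∀ u, (G.neighborSet u).Subsingleton) {u w : V} (huw : G.Reachable u w) :
    w = u ∨ G.Adj u w := by
  rw [reachable_iff_reflTransGen] at huw
  induction huw with
  | refl => exact .inl rfl
  | tail _ hxy ih =>
    obtain rfl | hux := ih
    · exact .inr hxy
    · exact .inl (h _ hxy hux.symm)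

theorem encard_supp_le_two_of_subsingleton_neighborSet
    (h : ∀ u, (G.neighborSet u).Subsingleton) (c : G.ConnectedComponent) : c.supp.encard ≤ 2 := by
  obtain ⟨u, rfl⟩ := c.exists_rep
  have hsupp : (G.connectedComponentMk u).supp ⊆ insert u (G.neighborSet u) := fun w hw ↦
    eq_or_adj_of_reachable_of_subsingleton_neighborSet h (ConnectedComponent.exact hw).symm
  calc (G.connectedComponentMk u).supp.encard
      ≤ (insert u (G.neighborSet u)).encard := Set.encard_le_encard hsupp
    _ ≤ (G.neighborSet u).encard + 1 := Set.encard_insert_le _ _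
    _ ≤ 1 + 1 := by gcongr; exact Set.encard_le_one_iff_subsingleton.2 (h u)
    _ = 2 := one_add_one_eq_two

theorem CycleFree.not_adj_of_isPath {k : ℕ} (h : CycleFree G (k + 1)) (hk : 2 ≤ k) {u w : V}
    {p : G.Walk u w} (hp : p.IsPath) (hlen : p.length = k) : ¬ G.Adj w u := by
  intro hwu
  have hcycle : (Walk.cons hwu p).IsCycle :=
    Walk.isCycle_iff_isPath_tail_and_le_length.2 ⟨by simpa using hp, by simp [hlen, hk]⟩
  exact h w _ hcycle (by simp [hlen])

theorem CycleFree.subsingleton_commonNeighbors (h : CycleFree G 4) {a c : V} (hac : a ≠ c) :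
    (G.commonNeighbors a c).Subsingleton := by
  rintro b ⟨hab, hcb⟩ d ⟨had, hcd⟩
  rw [mem_neighborSet] at hab hcb had hcd
  by_contra hbd
  let path : G.Walk a d := .cons hab (.cons hcb.symm (.cons hcd .nil))
  have hpath : path.IsPath := by
    simp [path, Walk.cons_isPath_iff, hab.ne, had.ne, hcd.ne, hcb.ne', hac, hbd]
  exact h.not_adj_of_isPath (by norm_num) hpath rfl had.symm

theorem ne_of_adj_of_mem_N2 {v p u : V} (hvp : G.Adj v p) (hu : u ∈ N2 G v) : p ≠ u := by
  rintro rfl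
  exact hu.2.1 hvp

theorem eq_of_adj_of_adj_of_mem_N2 (h4 : CycleFree G 4) (h6 : CycleFree G 6) {v a b c : V}
    (ha : a ∈ N2 G v) (hb : b ∈ N2 G v) (hc : c ∈ N2 G v) (hab : G.Adj a b) (hbc : G.Adj b c) :
    a = c := by
  by_contra hac
  obtain ⟨p, hvp, hpa⟩ := ha.2.2
  obtain ⟨q, hvq, hqc⟩ := hc.2.2
  obtain rfl | hpq := eq_or_ne p q
  · exact ne_of_adj_of_mem_N2 hvp hb <|
      h4.subsingleton_commonNeighbors hac ⟨hpa.symm, hqc.symm⟩ ⟨hab, hbc.symm⟩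
  · let path : G.Walk v q :=
      .cons hvp (.cons hpa (.cons hab (.cons hbc (.cons hqc.symm .nil))))
    have hpath : path.IsPath := by
      simp [path, Walk.cons_isPath_iff, ha.1.symm, hb.1.symm, hc.1.symm, hvp.ne, hvq.ne, hpa.ne,
        hab.ne, hbc.ne, hqc.ne', hac, hpq, ne_of_adj_of_mem_N2 hvp hb, ne_of_adj_of_mem_N2 hvp hc,
        (ne_of_adj_of_mem_N2 hvq ha).symm, (ne_of_adj_of_mem_N2 hvq hb).symm]
    exact h6.not_adj_of_isPath (by norm_num) hpath rfl hvq.symm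

theorem subsingleton_neighborSet_induce_N2 (h4 : CycleFree G 4) (h6 : CycleFree G 6) (v : V)
    (b : N2 G v) : ((G.induce (N2 G v)).neighborSet b).Subsingleton := fun a hba c hbc ↦
  Subtype.ext <| eq_of_adj_of_adj_of_mem_N2 h4 h6 a.2 b.2 c.2 hba.symm hbc

end

theorem stmt13_general {V : Type*} (G : SimpleGraph V) (h4 : CycleFree G 4) (h6 : CycleFree G 6)
    (v : V) (c : (G.induce (N2 G v)).ConnectedComponent) : c.supp.encard ≤ 2 :=
  encard_supp_le_two_of_subsingleton_neighborSet
    (subsingleton_neighborSet_induce_N2 h4 h6 v) c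

/-- In a graph with no cycles of lengths 4 and 6, every connected
component of `G[N₂(v)]` contains at most 2 vertices. -/
theorem stmt13 {V : Type*} [Fintype V] (G : SimpleGraph V)
    (h4 : CycleFree G 4) (h6 : CycleFree G 6) (v : V) :
    ∀ c : (G.induce (N2 G v)).ConnectedComponent, c.supp.ncard ≤ 2 := fun c ↦
  (Set.encard_le_coe_iff_finite_ncard_le.1 (stmt13_general G h4 h6 v c)).2
end
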